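/- Every completely reachable DFA with n states has a reset word of length at most (7n³ + 18n² − 64n + 48)/48 if n is even, and at most (7n³ + 15n² − 55n + 33)/48 if n is odd. -/

import Mathlib

open Finset

/-- The action of a word (list of letters) on a state, applying letters left to right. -/
def act {Q A : Type*} (δ : Q → A → Q) (q : Q) (w : List A) : Q := w.foldl δ q

/-- The image of a set of states under the action of a word. -/
def img {Q A : Type*} [DecidableEq Q] (δ : Q → A → Q) (P : Finset Q) (w : List A) : Finset Q :=
  P.image (fun q => act δ q w)

/-- `excl δ w = Q \ Q·w`. -/
def excl {Q A : Type*} [Fintype Q] [DecidableEq Q] (δ : Q → A → Q) (w : List A) : Finset Q :=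
  Finset.univ \ img δ Finset.univ w

/-- `dupl δ w` : the set of states with at least two preimages under the action of `w`. -/
def dupl {Q A : Type*} [Fintype Q] [DecidableEq Q] (δ : Q → A → Q) (w : List A) : Finset Q :=
  Finset.univ.filter (fun p => ∃ q₁ q₂ : Q, q₁ ≠ q₂ ∧ act δ q₁ w = p ∧ act δ q₂ w = p)

/-- A DFA is completely reachable if every nonempty subset of states is the image of the
full state set under the action of some word. -/
def CompletelyReachable {Q A : Type*} [Fintype Q] [DecidableEq Q] (δ : Q → A → Q) : Prop :=
  ∀ P : Finset Q, P.Nonempty → ∃ w : List A, img δ Finset.univ w = P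

theorem act_append {Q A : Type*} (δ : Q → A → Q) (q : Q) (u v : List A) :
    act δ q (u ++ v) = act δ (act δ q u) v := by
  simp [act, List.foldl_append]

theorem img_append {Q A : Type*} [DecidableEq Q] (δ : Q → A → Q) (P : Finset Q) (u v : List A) :
    img δ P (u ++ v) = img δ (img δ P u) v := by
  simp only [img, Finset.image_image]
  congr 1
  funext q
  exact act_append δ q u v

theorem mem_img {Q A : Type*} [DecidableEq Q] (δ : Q → A → Q) (P : Finset Q) (w : List A) (p : Q) :
    p ∈ img δ P w ↔ ∃ q ∈ P, act δ q w = p := by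
  simp [img]

/-- Frankl's skew set-pair bound for pairs. -/
theorem skew_bound {Q : Type*} [Fintype Q] [DecidableEq Q] (L d : ℕ) (S : Fin L → Finset Q)
    (x y : Fin L → Q) (hS : ∀ i, ((S i)ᶜ).card ≤ d) (hx : ∀ i, x i ∈ S i) (hy : ∀ i, y i ∈ S i)
    (hsk : ∀ i j, j < i → x i ∈ S j → y i ∈ S j → False) :
    L ≤ Nat.choose (d + 2) 2 := by
  classical
  obtain ⟨φ, hφ⟩ : ∃ φ : Q → ℚ, Function.Injective φ :=
    ⟨fun q => ((Fintype.equivFin Q q : ℕ) : ℚ), fun a b hab => by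
      simpa [Fin.val_inj] using hab⟩
  let p : Fin L → Polynomial ℚ := fun i => ∏ a ∈ (S i)ᶜ, (Polynomial.X - Polynomial.C (φ a))
  have hpd : ∀ i, (p i).natDegree < d + 1 := by
    intro i
    have : (p i).natDegree = ((S i)ᶜ).card := by
      simp only [p]
      exact Polynomial.natDegree_finsetProd_X_sub_C_eq_card _ _
    have := hS i
    omega
  have hpe : ∀ i q, (p i).eval (φ q) = 0 ↔ q ∉ S i := by
    intro i q
    simp only [p, Polynomial.eval_prod, Finset.prod_eq_zero_iff]
    constructor
    · rintro ⟨a, ha, h0⟩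
      have : q = a := hφ (by simpa [sub_eq_zero] using h0)
      subst this
      simpa using ha
    · intro hq
      exact ⟨q, by simpa using hq, by simp⟩
  let u : Fin L → (Sym2 (Fin (d + 1)) → ℚ) := fun i =>
    Sym2.lift ⟨fun a b => (p i).coeff a * (p i).coeff b, fun a b => mul_comm _ _⟩
  let ev : Q → Q → (Sym2 (Fin (d + 1)) → ℚ) → ℚ := fun s t f =>
    ∑ a : Fin (d + 1), ∑ b : Fin (d + 1), f s(a, b) * (φ s ^ (a : ℕ) * φ t ^ (b : ℕ))
  have hev : ∀ s t i, ev s t (u i) = (p i).eval (φ s) * (p i).eval (φ t) := by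
    intro s t i
    rw [Polynomial.eval_eq_sum_range' (hpd i), Polynomial.eval_eq_sum_range' (hpd i),
      Finset.sum_range, Finset.sum_range, Finset.sum_mul_sum]
    simp only [ev, u, Sym2.lift_mk]
    refine Finset.sum_congr rfl fun a _ => Finset.sum_congr rfl fun b _ => ?_
    ring
  have hlin : ∀ s t (c : Fin L → ℚ), ev s t (∑ i, c i • u i) = ∑ i, c i * ev s t (u i) := by
    intro s t c
    have hL : ev s t = ⇑(∑ a : Fin (d + 1), ∑ b : Fin (d + 1), (φ s ^ (a : ℕ) * φ t ^ (b : ℕ)) •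
        (LinearMap.proj s(a, b) : (Sym2 (Fin (d + 1)) → ℚ) →ₗ[ℚ] ℚ)) := by
      funext f
      simp [ev, LinearMap.sum_apply, mul_comm]
    rw [hL]
    simp only [map_sum, map_smul, smul_eq_mul]
  have hli : LinearIndependent ℚ u := by
    rw [Fintype.linearIndependent_iff]
    intro c hc
    by_contra! hne
    obtain ⟨i0, hi0⟩ := hne
    obtain ⟨i, hi, hmax⟩ := Finset.exists_max_image (Finset.univ.filter fun i => c i ≠ 0) id
      ⟨i0, by simp [hi0]⟩
    have h0 := hlin (x i) (y i) c
    rw [hc, Finset.sum_eq_single i] at h0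
    · have hz : ev (x i) (y i) 0 = 0 := by simp [ev]
      rw [hz, hev] at h0
      have h1 : (p i).eval (φ (x i)) ≠ 0 := by
        rw [Ne, hpe]; simpa using hx i
      have h2 : (p i).eval (φ (y i)) ≠ 0 := by
        rw [Ne, hpe]; simpa using hy i
      have h3 : c i ≠ 0 := by simpa using hi
      exact (mul_ne_zero h3 (mul_ne_zero h1 h2)) h0.symm
    · intro j _ hj
      rcases lt_or_gt_of_ne hj with hlt | hgt
      · rw [hev]
        by_cases h1 : x i ∈ S j
        · have h2 : y i ∉ S j := fun h2 => hsk i j hlt h1 h2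
          rw [(hpe j (y i)).2 h2]; simp
        · rw [(hpe j (x i)).2 h1]; simp
      · have : c j = 0 := by
          by_contra hcj
          have := hmax j (by simp [hcj])
          exact absurd hgt (not_lt.2 this)
        rw [this, zero_mul]
    · simp
  have := hli.fintype_card_le_finrank
  simpa [Sym2.card] using this

/-- Pin's compression bound: shortest words merging two states of `S`. -/
theorem compress {Q A : Type*} [Fintype Q] [DecidableEq Q] (δ : Q → A → Q) (S : Finset Q)
    (hex : ∃ w : List A, ∃ x ∈ S, ∃ y ∈ S, x ≠ y ∧ act δ x w = act δ y w) :
    ∃ w : List A, w.length ≤ Nat.choose (Fintype.card Q - S.card + 2) 2 ∧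
      (img δ S w).card < S.card := by
  classical
  have hex' : ∃ l : ℕ, ∃ w : List A, w.length = l ∧
      ∃ x ∈ S, ∃ y ∈ S, x ≠ y ∧ act δ x w = act δ y w := by
    obtain ⟨w, hw⟩ := hex
    exact ⟨_, w, rfl, hw⟩
  obtain ⟨w, hwl, x, hx, y, hy, hxy, hw⟩ := Nat.find_spec hex'
  have hmin : ∀ v : List A, v.length < w.length → ∀ a ∈ S, ∀ b ∈ S,
      act δ a v = act δ b v → a = b := by
    intro v hv a ha b hb hab
    by_contra hne
    exact Nat.find_min hex' (hwl ▸ hv) ⟨v, rfl, a, ha, b, hb, hne, hab⟩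
  refine ⟨w, ?_, ?_⟩
  · refine skew_bound w.length _ (fun i => img δ S (w.take i)) (fun i => act δ x (w.take i))
      (fun i => act δ y (w.take i)) ?_ ?_ ?_ ?_
    · intro i
      rw [Finset.card_compl]
      have : (img δ S (w.take i)).card = S.card := by
        apply Finset.card_image_of_injOn
        intro a ha b hb hab
        exact hmin (w.take i) (by simp) a ha b hb hab
      rw [this]
    · intro i
      exact (mem_img _ _ _ _).2 ⟨x, hx, rfl⟩
    · intro i
      exact (mem_img _ _ _ _).2 ⟨y, hy, rfl⟩
    · intro i j hji h1 h2
      obtain ⟨x', hx', ex⟩ := (mem_img _ _ _ _).1 h1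
      obtain ⟨y', hy', ey⟩ := (mem_img _ _ _ _).1 h2
      have hne : x' ≠ y' := by
        rintro rfl
        exact hxy (hmin (w.take i) (by simp) x hx y hy (ex.symm.trans ey))
      apply hne
      refine hmin (w.take j ++ w.drop i) ?_ x' hx' y' hy' ?_
      · have h3 := i.2
        have h4 : (j : ℕ) < i := hji
        simp only [List.length_append, List.length_take, List.length_drop]
        omega
      · rw [act_append, act_append, ex, ey, ← act_append, ← act_append, List.take_append_drop, hw]
  · apply lt_of_le_of_ne Finset.card_image_le
    intro hc
    exact hxy (Finset.card_image_iff.1 hc hx hy hw)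

/-- In a completely reachable DFA every state is avoided by a word of length at most `n`. -/
theorem avoid {Q A : Type*} [Fintype Q] [DecidableEq Q] (δ : Q → A → Q)
    (h : CompletelyReachable δ) (hn : 2 ≤ Fintype.card Q) (q : Q) :
    ∃ w : List A, w.length ≤ Fintype.card Q ∧ q ∉ img δ Finset.univ w := by
  classical
  have hex : ∃ l : ℕ, ∃ w : List A, w.length = l ∧ img δ Finset.univ w = Finset.univ.erase q := by
    obtain ⟨w, hw⟩ := h (Finset.univ.erase q) (by
      rw [← Finset.card_pos, Finset.card_erase_of_mem (Finset.mem_univ _), Finset.card_univ]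
      omega)
    exact ⟨_, w, rfl, hw⟩
  obtain ⟨w, hwl, hw⟩ := Nat.find_spec hex
  have hmin : ∀ v : List A, v.length < w.length → img δ Finset.univ v ≠ Finset.univ.erase q :=
    fun v hv hc => Nat.find_min hex (hwl ▸ hv) ⟨v, rfl, hc⟩
  refine ⟨w, ?_, by rw [hw]; simp⟩
  have key : ∀ i : Fin w.length, ∃ p, img δ Finset.univ (w.take (i + 1)) = Finset.univ.erase p := by
    intro i
    have hi := i.2
    have hsplit : img δ (img δ Finset.univ (w.take (i + 1))) (w.drop (i + 1)) =
        Finset.univ.erase q := by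
      rw [← img_append, List.take_append_drop, hw]
    have hne : img δ Finset.univ (w.take (i + 1)) ≠ Finset.univ := by
      intro hc
      rw [hc] at hsplit
      exact hmin _ (by simp only [List.length_drop]; omega) hsplit
    obtain ⟨p, hp⟩ : ∃ p, p ∉ img δ Finset.univ (w.take (i + 1)) := by
      by_contra! hc
      exact hne (Finset.eq_univ_iff_forall.2 hc)
    refine ⟨p, Finset.eq_of_subset_of_card_le ?_ ?_⟩
    · intro r hr
      refine Finset.mem_erase.2 ⟨?_, Finset.mem_univ _⟩
      rintro rfl
      exact hp hr
    · have h1 : (Finset.univ.erase q).card ≤ (img δ Finset.univ (w.take (i + 1))).card := by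
        rw [← hsplit]
        exact Finset.card_image_le
      rw [Finset.card_erase_of_mem (Finset.mem_univ _)] at h1 ⊢
      exact h1
  choose p hp using key
  have hinj : ∀ i j : Fin w.length, i < j → p i ≠ p j := by
    intro i j hij hc
    have hi := i.2
    have hj := j.2
    have hij' : (i : ℕ) < j := hij
    refine hmin (w.take (i + 1) ++ w.drop (j + 1)) ?_ ?_
    · simp only [List.length_append, List.length_take, List.length_drop]
      omega
    · rw [img_append, hp, hc, ← hp, ← img_append, List.take_append_drop, hw]
  have hinj' : Function.Injective p := by
    intro i j hc
    rcases lt_trichotomy i j with hlt | heq | hgt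
    · exact absurd hc (hinj i j hlt)
    · exact heq
    · exact absurd hc.symm (hinj j i hgt)
  simpa using Fintype.card_le_of_injective p hinj'

theorem first_letter {Q A : Type*} [Fintype Q] [DecidableEq Q] (δ : Q → A → Q)
    (h : CompletelyReachable δ) (hn : 2 ≤ Fintype.card Q) :
    ∃ a : A, (img δ Finset.univ [a]).card + 1 ≤ Fintype.card Q := by
  classical
  by_contra! hc
  have hall : ∀ w : List A, img δ Finset.univ w = Finset.univ := by
    intro w
    induction w with
    | nil => simp [img, act]
    | cons a w ih =>
      rw [← List.singleton_append, img_append]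
      have : img δ Finset.univ [a] = Finset.univ := by
        rw [← Finset.card_eq_iff_eq_univ]
        have h1 := hc a
        have h2 := Finset.card_le_univ (img δ Finset.univ [a])
        omega
      rw [this, ih]
  obtain ⟨q⟩ : Nonempty Q := Fintype.card_pos_iff.1 (by omega)
  obtain ⟨w, -, hw⟩ := avoid δ h hn q
  rw [hall] at hw
  simp at hw

/-- Reaching rank at most about `n / 2` cheaply. -/
theorem halve {Q A : Type*} [Fintype Q] [DecidableEq Q] (δ : Q → A → Q)
    (h : CompletelyReachable δ) (hn : 2 ≤ Fintype.card Q) (t : ℕ) (ht : 2 * t < Fintype.card Q) :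
    ∃ v : List A, v.length ≤ 1 + Fintype.card Q * t ∧
      (img δ Finset.univ v).card + (t + 1) ≤ Fintype.card Q := by
  classical
  induction t with
  | zero =>
    obtain ⟨a, ha⟩ := first_letter δ h hn
    exact ⟨[a], by simp, by simpa using ha⟩
  | succ t ih =>
    obtain ⟨v, hv, hc⟩ := ih (by omega)
    by_cases hlt : (img δ Finset.univ v).card + (t + 1 + 1) ≤ Fintype.card Q
    · exact ⟨v, by rw [Nat.mul_succ]; omega, hlt⟩
    obtain ⟨p, hp, hfib⟩ := Finset.exists_card_fiber_lt_of_card_lt_mul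
      (s := (Finset.univ : Finset Q)) (t := img δ Finset.univ v) (f := fun q => act δ q v) (n := 2)
      (by rw [Finset.card_univ]; omega)
    obtain ⟨q, -, hq⟩ := (mem_img _ _ _ _).1 hp
    obtain ⟨w, hw, hqw⟩ := avoid δ h hn q
    refine ⟨w ++ v, by rw [List.length_append, Nat.mul_succ]; omega, ?_⟩
    have hsub : img δ Finset.univ (w ++ v) ⊆ (img δ Finset.univ v).erase p := by
      intro r hr
      rw [img_append] at hr
      obtain ⟨s, hs, hsr⟩ := (mem_img _ _ _ _).1 hr
      refine Finset.mem_erase.2 ⟨?_, (mem_img _ _ _ _).2 ⟨s, Finset.mem_univ _, hsr⟩⟩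
      rintro rfl
      have : s = q := Finset.card_le_one.1 (Nat.lt_succ_iff.1 hfib) s (by simp [hsr]) q
        (by simp [hq])
      subst this
      exact hqw hs
    have h1 := Finset.card_le_card hsub
    rw [Finset.card_erase_of_mem hp] at h1
    have h2 := Finset.card_pos.2 ⟨p, hp⟩
    omega

theorem descend {Q A : Type*} [Fintype Q] [DecidableEq Q] (δ : Q → A → Q)
    (h : CompletelyReachable δ) (k : ℕ) (hk : k + 1 ≤ Fintype.card Q) (S : Finset Q)
    (hS : S.Nonempty) (hSk : S.card ≤ k + 1) :
    ∃ w : List A, (img δ S w).card = 1 ∧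
      w.length + Nat.choose (Fintype.card Q - k + 1) 3 ≤ Nat.choose (Fintype.card Q + 1) 3 := by
  classical
  induction k generalizing S with
  | zero =>
    have := Finset.card_pos.2 hS
    exact ⟨[], by simp only [img, act, List.foldl_nil, Finset.image_id']; omega, by simp⟩
  | succ k ih =>
    by_cases hle : S.card ≤ k + 1
    · obtain ⟨w, hw1, hw2⟩ := ih (by omega) S hS hle
      refine ⟨w, hw1, le_trans ?_ hw2⟩
      have := Nat.choose_le_choose 3 (show Fintype.card Q - (k + 1) + 1 ≤ Fintype.card Q - k + 1 by
        omega)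
      omega
    · have hcard : S.card = k + 2 := by omega
      obtain ⟨x, hx, y, hy, hxy⟩ := Finset.one_lt_card.1 (show 1 < S.card by omega)
      obtain ⟨v, hv⟩ := h {x} (by simp)
      have hval : ∀ z, act δ z v = x := by
        intro z
        have : act δ z v ∈ img δ Finset.univ v := (mem_img _ _ _ _).2 ⟨z, Finset.mem_univ _, rfl⟩
        rw [hv] at this
        simpa using this
      obtain ⟨u, hu1, hu2⟩ := compress δ S ⟨v, x, hx, y, hy, hxy, by rw [hval, hval]⟩
      obtain ⟨w, hw1, hw2⟩ := ih (by omega) (img δ S u) (hS.image _) (by omega)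
      refine ⟨u ++ w, by rw [img_append]; exact hw1, ?_⟩
      rw [List.length_append]
      obtain ⟨e, he⟩ : ∃ e, Fintype.card Q = e + (k + 2) := ⟨_, (Nat.sub_add_cancel hk).symm⟩
      have e1 : Fintype.card Q - S.card + 2 = e + 2 := by omega
      have e2 : Fintype.card Q - k + 1 = (e + 2) + 1 := by omega
      have e3 : Fintype.card Q - (k + 1) + 1 = e + 2 := by omega
      rw [e1] at hu1
      rw [e2, Nat.choose_succ_succ' (e + 2) 2] at hw2
      rw [e3]
      norm_num at hw2
      omega

theorem six_choose (m : ℕ) : 6 * Nat.choose (m + 2) 3 = (m + 2) * (m + 1) * m := by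
  induction m with
  | zero => simp
  | succ m ih =>
    have h2 : 2 * Nat.choose (m + 2) 2 = (m + 2) * (m + 1) := by
      have := Nat.triangle_succ (m + 1)
      rw [Nat.choose_two_right]
      have h3 := Nat.div_mul_cancel (Nat.even_mul_pred_self (m + 2)).two_dvd
      simp only [show m + 2 - 1 = m + 1 by omega] at h3 ⊢
      omega
    have h1 : Nat.choose (m + 1 + 2) 3 = Nat.choose (m + 2) 2 + Nat.choose (m + 2) 3 :=
      Nat.choose_succ_succ' (m + 2) 2
    rw [h1]
    nlinarith

theorem combine {Q A : Type*} [Fintype Q] [DecidableEq Q] (δ : Q → A → Q)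
    (h : CompletelyReachable δ) (hn : 2 ≤ Fintype.card Q) (t k : ℕ)
    (ht : 2 * t < Fintype.card Q) (hk : Fintype.card Q = t + k + 2) :
    ∃ w : List A, (img δ Finset.univ w).card = 1 ∧
      w.length + Nat.choose (t + 3) 3 ≤ 1 + Fintype.card Q * t +
        Nat.choose (Fintype.card Q + 1) 3 := by
  obtain ⟨v, hv1, hv2⟩ := halve δ h hn t ht
  have hne : (Finset.univ : Finset Q).Nonempty := by
    rw [← Finset.card_pos, Finset.card_univ]; omega
  obtain ⟨w, hw1, hw2⟩ := descend δ h k (by omega) (img δ Finset.univ v) (hne.image _) (by omega)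
  refine ⟨v ++ w, by rw [img_append]; exact hw1, ?_⟩
  rw [show Fintype.card Q - k + 1 = t + 3 by omega] at hw2
  rw [List.length_append]
  omega

/-- Every completely reachable DFA with n states has a reset word of length at most
(7n³ + 18n² − 64n + 48)/48 if n is even and (7n³ + 15n² − 55n + 33)/48 if n is odd. -/
theorem completelyReachable_reset_bound {Q A : Type*} [Fintype Q] [DecidableEq Q]
    [Nonempty Q] [Fintype A] (δ : Q → A → Q) (h : CompletelyReachable δ) (n : ℕ)
    (hn : n = Fintype.card Q) :
    ∃ w : List A, (img δ Finset.univ w).card = 1 ∧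
      (Even n → (48 : ℤ) * w.length ≤ 7 * (n : ℤ) ^ 3 + 18 * (n : ℤ) ^ 2 - 64 * n + 48) ∧
      (Odd n → (48 : ℤ) * w.length ≤ 7 * (n : ℤ) ^ 3 + 15 * (n : ℤ) ^ 2 - 55 * n + 33) := by
  rcases Nat.lt_or_ge n 2 with hlt | hge
  · have hpos : 0 < Fintype.card Q := Fintype.card_pos
    have h1 : n = 1 := by omega
    refine ⟨[], ?_, ?_, ?_⟩
    · simp only [img, act, List.foldl_nil, Finset.image_id', Finset.card_univ]
      omega
    · subst h1
      intro he
      exact absurd he (by decide)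
    · subst h1
      intro _
      norm_num
  · rcases Nat.even_or_odd' n with ⟨m, hm | hm⟩
    · obtain ⟨m, rfl⟩ : ∃ j, m = j + 1 := ⟨m - 1, by omega⟩
      obtain ⟨w, hw1, hw2⟩ := combine δ h (by omega) m m (by omega) (by omega)
      refine ⟨w, hw1, fun _ => ?_, fun ho => ?_⟩
      · rw [← hn, hm] at hw2
        have a1 := six_choose (m + 1)
        have a2 := six_choose (2 * m + 1)
        rw [show m + 1 + 2 = m + 3 by omega] at a1
        rw [show 2 * m + 1 + 2 = 2 * (m + 1) + 1 by ring] at a2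
        rw [hm]
        zify at hw2 a1 a2
        push_cast
        nlinarith
      · exact absurd ho (by rw [hm, Nat.not_odd_iff_even]; exact even_two_mul _)
    · obtain ⟨m, rfl⟩ : ∃ j, m = j + 1 := ⟨m - 1, by omega⟩
      obtain ⟨w, hw1, hw2⟩ := combine δ h (by omega) (m + 1) m (by omega) (by omega)
      refine ⟨w, hw1, fun he => ?_, fun _ => ?_⟩
      · exact absurd he (by rw [hm, Nat.not_even_iff_odd]; exact odd_two_mul_add_one _)
      · rw [← hn, hm] at hw2
        have a1 := six_choose (m + 2)
        have a2 := six_choose (2 * m + 2)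
        rw [show m + 2 + 2 = m + 1 + 3 by omega] at a1
        rw [show 2 * m + 2 + 2 = 2 * (m + 1) + 1 + 1 by ring] at a2
        rw [hm]
        zify at hw2 a1 a2
        push_cast
        nlinarith
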